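/- Let k ≥ 5. For any multigraph G of maximum degree Δ whose matching number is less than k and such that every two of its edges are incident or joined by an edge of G, the strong clique number of G satisfies ω₂'(G) ≤ (k − 1/2)Δ. -/

import Mathlib

/-!
Since any two edges are incident or joined by an edge, the bound is one on the total number of
edges, and it follows from fractional vertex covers obtained from a Tutte–Berge type argument.

Let `n` be the number of vertices. If `n ≤ 2k - 1`, then the degree sum gives
`2|E| ≤ nΔ ≤ (2k - 1)Δ`. Otherwise put `d = n - 2k` and add to the underlying simple graph `d` new
vertices adjacent to everything (`joinComplete`). A perfect matching of the new graph would contain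
at least `(n - d) / 2 = k` original edges (`exists_matching`), so there is none, and Tutte's
theorem gives a set `u` whose deletion leaves more than `|u|` odd components; by parity at least
`|u| + 2`. As there are at least two components, `u` contains all new vertices. Write `U` for the
set of old vertices in `u`. All edges avoiding `U` lie in a single component, with vertex set `B`
say, and all other components are single vertices, so that `2|U| + |B| ≤ 2k - 1`
(`exists_cover`). Every edge meets `U` or lies inside `B`; weighting the vertices of `U` by `2` and
those of `B` by `1` and counting incidences gives `2|E| ≤ (2|U| + |B|)Δ ≤ (2k - 1)Δ`
(`two_mul_card_le`).
-/

/-- A strong clique of the multigraph with edge type `E` and endpoint map `ends`: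
a set of edges every two of which are incident or joined by an edge. -/
def IsMStrongCliqueSet {V E : Type} (ends : E → Sym2 V) (S : Set E) : Prop :=
  ∀ e ∈ S, ∀ f ∈ S, e ≠ f →
    (∃ x, x ∈ ends e ∧ x ∈ ends f) ∨
    ∃ x y, x ∈ ends e ∧ y ∈ ends f ∧ ∃ g, ends g = s(x, y)

open Finset in
/-- Double counting of weighted incidences: if the weights of the two ends of every edge add up to
at least `2`, then twice the number of edges is at most the total weight times the maximum
degree. -/
lemma two_mul_card_le {V E : Type} [Fintype V] [Fintype E]
    (ends : E → Sym2 V) (hloop : ∀ e, ¬ (ends e).IsDiag)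
    (Δ : ℕ) (hΔ : ∀ v : V, {e : E | v ∈ ends e}.ncard ≤ Δ) (w : V → ℕ)
    (hw : ∀ e x y, ends e = s(x, y) → 2 ≤ w x + w y) :
    2 * Fintype.card E ≤ (∑ v, w v) * Δ := by
  classical
  have key : ∀ e, 2 ≤ ∑ v, if v ∈ ends e then w v else 0 := by
    intro e
    obtain ⟨x, y, hxy⟩ : ∃ x y, ends e = s(x, y) := by
      induction h : ends e with | _ x y => exact ⟨x, y, rfl⟩
    have hne : x ≠ y := by
      have := hloop e
      rw [hxy] at this
      simpa using this
    rw [← Finset.sum_filter]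
    have : (univ.filter fun v => v ∈ ends e) = {x, y} := by
      ext v; simp [hxy]
    rw [this, Finset.sum_pair hne]
    exact hw e x y hxy
  calc 2 * Fintype.card E = ∑ _e : E, 2 := by simp [mul_comm]
    _ ≤ ∑ e : E, ∑ v, if v ∈ ends e then w v else 0 := Finset.sum_le_sum fun e _ => key e
    _ = ∑ v, ∑ e : E, if v ∈ ends e then w v else 0 := Finset.sum_comm
    _ = ∑ v, w v * {e : E | v ∈ ends e}.ncard := by
        refine Finset.sum_congr rfl fun v _ => ?_
        rw [← Finset.sum_filter, Finset.sum_const, smul_eq_mul, mul_comm,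
          Set.ncard_eq_toFinset_card', Set.toFinset_ofPred]
    _ ≤ ∑ v, w v * Δ := Finset.sum_le_sum fun v _ => Nat.mul_le_mul_left _ (hΔ v)
    _ = _ := by rw [Finset.sum_mul]

/-- The join of `G` with a complete graph on `d` new vertices. -/
def joinComplete {V : Type} (G : SimpleGraph V) (d : ℕ) : SimpleGraph (V ⊕ Fin d) where
  Adj a b := a ≠ b ∧ ∀ x y, a = Sum.inl x → b = Sum.inl y → G.Adj x y
  symm := ⟨fun _ _ h => ⟨h.1.symm, fun x y hx hy => (h.2 y x hy hx).symm⟩⟩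
  loopless := ⟨fun _ h => h.1 rfl⟩

/-- A perfect matching of the join with `d` new vertices contains enough original edges: at most
`d` old vertices are matched to new ones. -/
lemma exists_matching {V E : Type} [Fintype V] [Fintype E]
    (ends : E → Sym2 V) (G : SimpleGraph V)
    (hG : ∀ x y, G.Adj x y → ∃ e, ends e = s(x, y)) (d : ℕ)
    (M : (joinComplete G d).Subgraph) (hM : M.IsPerfectMatching) :
    ∃ F : Finset E, (∀ e ∈ F, ∀ f ∈ F, e ≠ f → ¬ ∃ x, x ∈ ends e ∧ x ∈ ends f) ∧
      Fintype.card V ≤ 2 * F.card + d := by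
  classical
  rw [SimpleGraph.Subgraph.isPerfectMatching_iff] at hM
  choose p hp hpu using hM
  -- one edge is chosen per pair of ends, so that both ends of a matching edge select the same one
  have hG' : ∀ z : Sym2 V, ∃ o : Option E, (z ∈ G.edgeSet → ∃ e, o = some e ∧ ends e = z) := by
    intro z
    by_cases hz : z ∈ G.edgeSet
    · induction z with | _ x y =>
      obtain ⟨e, he⟩ := hG x y hz
      exact ⟨some e, fun _ => ⟨e, rfl, he⟩⟩
    · exact ⟨none, fun h => absurd h hz⟩
  choose g hg using hG'
  let F : Finset E := Finset.univ.filter fun e =>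
    ∃ x y, M.Adj (Sum.inl x) (Sum.inl y) ∧ g s(x, y) = some e ∧ ends e = s(x, y)
  have hinj : ∀ a b c, M.Adj a b → M.Adj a c → b = c := fun a b c h1 h2 =>
    (hpu a b h1).trans (hpu a c h2).symm
  refine ⟨F, ?_, ?_⟩
  · intro e he f hf hef ⟨x, hxe, hxf⟩
    simp only [F, Finset.mem_filter, Finset.mem_univ, true_and] at he hf
    obtain ⟨a, b, hab, hge, hee⟩ := he
    obtain ⟨a', b', hab', hgf, hff⟩ := hf
    have h1 : ∃ y, M.Adj (Sum.inl x) (Sum.inl y) ∧ s(a, b) = s(x, y) := by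
      rw [hee, Sym2.mem_iff] at hxe
      rcases hxe with rfl | rfl
      · exact ⟨b, hab, rfl⟩
      · exact ⟨a, hab.symm, Sym2.eq_swap⟩
    have h2 : ∃ y, M.Adj (Sum.inl x) (Sum.inl y) ∧ s(a', b') = s(x, y) := by
      rw [hff, Sym2.mem_iff] at hxf
      rcases hxf with rfl | rfl
      · exact ⟨b', hab', rfl⟩
      · exact ⟨a', hab'.symm, Sym2.eq_swap⟩
    obtain ⟨y, hy, hy'⟩ := h1
    obtain ⟨z, hz, hz'⟩ := h2
    have := Sum.inl_injective (hinj _ _ _ hy hz)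
    subst this
    rw [hy'] at hge
    rw [hz'] at hgf
    exact hef (Option.some_injective _ (hge.symm.trans hgf))
  · -- every old vertex is an end of an edge of `F` or the partner of a new vertex
    let T : Finset V := F.biUnion fun e => Finset.univ.filter fun v => v ∈ ends e
    let R : Finset V := Finset.univ.filter fun v => ∃ j : Fin d, p (Sum.inl v) = Sum.inr j
    have hTR : (Finset.univ : Finset V) ⊆ T ∪ R := by
      intro v _
      rw [Finset.mem_union]
      cases hv : p (Sum.inl v) with
      | inr j => right; simp only [R, Finset.mem_filter, Finset.mem_univ, true_and]; exact ⟨j, hv⟩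
      | inl y =>
        left
        have hvy : M.Adj (Sum.inl v) (Sum.inl y) := hv ▸ hp (Sum.inl v)
        have hadj : G.Adj v y := hvy.adj_sub.2 v y rfl rfl
        obtain ⟨e, he, hee⟩ := hg s(v, y) hadj
        simp only [T, Finset.mem_biUnion, Finset.mem_filter, Finset.mem_univ, true_and, F]
        exact ⟨e, ⟨v, y, hvy, he, hee⟩, by rw [hee]; simp⟩
    have hT : T.card ≤ F.card * 2 := by
      refine Finset.card_biUnion_le_card_mul _ _ _ fun e _ => ?_
      obtain ⟨x, y, hxy⟩ : ∃ x y, ends e = s(x, y) := by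
        induction h : ends e with | _ x y => exact ⟨x, y, rfl⟩
      have : (Finset.univ.filter fun v => v ∈ ends e) = {x, y} := by
        ext v; simp [hxy]
      rw [this]
      exact Finset.card_le_two
    have hR : R.card ≤ d := by
      have : (R.image fun v => p (Sum.inl v)).card ≤
          (Finset.univ.image (Sum.inr : Fin d → V ⊕ Fin d)).card := by
        refine Finset.card_le_card fun z hz => ?_
        obtain ⟨v, hv, rfl⟩ := Finset.mem_image.1 hz
        obtain ⟨j, hj⟩ := (Finset.mem_filter.1 hv).2
        exact Finset.mem_image.2 ⟨j, Finset.mem_univ _, hj.symm⟩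
      rw [Finset.card_image_of_injective _ fun v v' h => Sum.inl_injective <|
          hinj _ _ _ (hp (Sum.inl v)).symm ((show p (Sum.inl v) = p (Sum.inl v') from h) ▸
            (hp (Sum.inl v')).symm), Finset.card_image_of_injective _ Sum.inr_injective] at this
      simpa using this
    have h1 := Finset.card_le_card hTR
    have h2 := Finset.card_union_le T R
    rw [Finset.card_univ] at h1
    omega

/-- If all edges of a finite graph lie in one component, then every other component is a single
vertex, so the vertices outside a suitable set carrying all edges are at least as many as the odd
components, up to one. -/
lemma exists_support {W : Type} [Finite W] (K : SimpleGraph W)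
    (h : ∀ a b c e, K.Adj a b → K.Adj c e → K.Reachable a c) :
    ∃ S : Set W, (∀ a b, K.Adj a b → a ∈ S ∧ b ∈ S) ∧ K.oddComponents.ncard ≤ Sᶜ.ncard + 1 := by
  classical
  have hrep : ∀ c : K.ConnectedComponent, ∃ v, K.connectedComponentMk v = c := fun c =>
    c.ind fun v => ⟨v, rfl⟩
  choose r hr using hrep
  have hout : ∀ T : Set K.ConnectedComponent, T.ncard ≤ (r '' T).ncard := fun T =>
    (Set.ncard_image_of_injective T (Function.LeftInverse.injective hr)).ge
  by_cases hE : ∃ a b, K.Adj a b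
  · obtain ⟨a, b, hab⟩ := hE
    refine ⟨(K.connectedComponentMk a).supp, ?_, ?_⟩
    · intro x y hxy
      rw [SimpleGraph.ConnectedComponent.mem_supp_iff, SimpleGraph.ConnectedComponent.mem_supp_iff,
        SimpleGraph.ConnectedComponent.eq, SimpleGraph.ConnectedComponent.eq]
      exact ⟨h x y a b hxy hab, h y x a b hxy.symm hab⟩
    · have h1 := Set.ncard_le_ncard_sdiff_add_ncard K.oddComponents {K.connectedComponentMk a}
      rw [Set.ncard_singleton] at h1
      refine h1.trans (Nat.add_le_add_right ((hout _).trans ?_) 1)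
      refine Set.ncard_le_ncard ?_ (Set.toFinite _)
      rintro _ ⟨c, hc, rfl⟩ hmem
      rw [SimpleGraph.ConnectedComponent.mem_supp_iff] at hmem
      exact hc.2 ((hr c).symm.trans hmem)
  · refine ⟨∅, fun a b hab => absurd ⟨a, b, hab⟩ hE, ?_⟩
    refine (hout _).trans (le_trans (Set.ncard_le_ncard (fun x _ => by simp) (Set.toFinite _))
      (Nat.le_succ _))

/-- A graph in which every two edges meet or are joined by an edge, and whose join with `d` new
vertices has no perfect matching although its order `n + d` is even, has a small cover: sets `U`,
`B` with `2|U| + |B| < n - d` such that every edge meets `U` or lies in `B`. -/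
lemma exists_cover {V : Type} [Fintype V] (G : SimpleGraph V) (d : ℕ)
    (heven : Even (Fintype.card V + d))
    (h2 : ∀ a b c e, G.Adj a b → G.Adj c e → a = c ∨ a = e ∨ b = c ∨ b = e ∨
      G.Adj a c ∨ G.Adj a e ∨ G.Adj b c ∨ G.Adj b e)
    (hM : ¬ ∃ M : (joinComplete G d).Subgraph, M.IsPerfectMatching) :
    ∃ U B : Set V, (∀ x y, G.Adj x y → x ∈ U ∨ y ∈ U ∨ (x ∈ B ∧ y ∈ B)) ∧
      2 * U.ncard + B.ncard + d + 1 ≤ Fintype.card V := by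
  classical
  rw [SimpleGraph.tutte] at hM
  push Not at hM
  obtain ⟨u, hu⟩ := hM
  unfold SimpleGraph.IsTutteViolator at hu
  set H := joinComplete G d with hH
  set K := ((⊤ : H.Subgraph).deleteVerts u).coe with hK
  have hKadj : ∀ a b, K.Adj a b ↔ H.Adj a.1 b.1 := by
    intro a b
    have ha := a.2
    have hb := b.2
    simp only [SimpleGraph.Subgraph.deleteVerts_verts, SimpleGraph.Subgraph.verts_top] at ha hb
    rw [hK, SimpleGraph.Subgraph.coe_adj, SimpleGraph.Subgraph.deleteVerts_adj]
    simp [ha.2, hb.2]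
  have hmem : ∀ a, a ∈ ((⊤ : H.Subgraph).deleteVerts u).verts ↔ a ∉ u := by
    intro a; simp
  have hcard : Nat.card ((⊤ : H.Subgraph).deleteVerts u).verts + u.ncard
      = Fintype.card V + d := by
    have h1 : ((⊤ : H.Subgraph).deleteVerts u).verts = uᶜ := by ext a; simp
    rw [Nat.card_coe_set_eq, h1, add_comm, Set.ncard_add_ncard_compl]
    simp
  have hpar := SimpleGraph.odd_ncard_oddComponents K
  have hodd : u.ncard + 2 ≤ K.oddComponents.ncard := by
    by_contra hcon
    have h3 : K.oddComponents.ncard = u.ncard + 1 := by omega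
    rw [h3, Nat.odd_iff, Nat.odd_iff] at hpar
    rw [Nat.even_iff] at heven
    omega
  -- a surviving new vertex would make the graph connected
  have hnew : ∀ j : Fin d, Sum.inr j ∈ u := by
    intro j
    by_contra hj
    let z : ((⊤ : H.Subgraph).deleteVerts u).verts := ⟨Sum.inr j, (hmem _).2 hj⟩
    have hz : ∀ a, K.Reachable a z := by
      intro a
      by_cases haz : a = z
      · rw [haz]
      · refine SimpleGraph.Adj.reachable ((hKadj _ _).2 ⟨?_, ?_⟩)
        · exact fun h => haz (Subtype.ext h)
        · intro x y _ hy
          cases hy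
    have : K.oddComponents.ncard ≤ 1 := by
      rw [Set.ncard_le_one_iff]
      intro c c' _ _
      induction c using SimpleGraph.ConnectedComponent.ind
      induction c' using SimpleGraph.ConnectedComponent.ind
      rw [SimpleGraph.ConnectedComponent.eq]
      exact (hz _).trans (hz _).symm
    omega
  have hKl : ∀ a : ((⊤ : H.Subgraph).deleteVerts u).verts, ∃ x, a.1 = Sum.inl x := by
    rintro ⟨x | j, ha⟩
    · exact ⟨x, rfl⟩
    · exact absurd (hnew j) ((hmem _).1 ha)
  have hHG : ∀ x y, H.Adj (Sum.inl x) (Sum.inl y) ↔ G.Adj x y := by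
    intro x y
    refine ⟨fun h => h.2 x y rfl rfl, fun h => ⟨fun h' => h.ne (Sum.inl_injective h'), ?_⟩⟩
    rintro _ _ ⟨⟩ ⟨⟩
    exact h
  obtain ⟨S, hS, hSc⟩ := exists_support K (by
    intro a b c e hab hce
    obtain ⟨a', ha⟩ := hKl a
    obtain ⟨b', hb⟩ := hKl b
    obtain ⟨c', hc⟩ := hKl c
    obtain ⟨e', he⟩ := hKl e
    have hg : ∀ p q p' q', p.1 = Sum.inl p' → q.1 = Sum.inl q' → (K.Adj p q ↔ G.Adj p' q') := by
      intro p q p' q' hp hq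
      rw [hKadj, hp, hq, hHG]
    have hq : ∀ (p q : ((⊤ : H.Subgraph).deleteVerts u).verts) (p' q' : V),
        p.1 = Sum.inl p' → q.1 = Sum.inl q' → p' = q' → K.Reachable p q := by
      intro p q p' q' hp hq h
      have : p = q := Subtype.ext (by rw [hp, hq, h])
      rw [this]
    have rab := hab.reachable
    have rce := hce.reachable
    rcases h2 a' b' c' e' ((hg _ _ _ _ ha hb).1 hab) ((hg _ _ _ _ hc he).1 hce) with
      h | h | h | h | h | h | h | h
    · exact hq _ _ _ _ ha hc h
    · exact (hq _ _ _ _ ha he h).trans rce.symm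
    · exact rab.trans (hq _ _ _ _ hb hc h)
    · exact rab.trans ((hq _ _ _ _ hb he h).trans rce.symm)
    · exact ((hg _ _ _ _ ha hc).2 h).reachable
    · exact ((hg _ _ _ _ ha he).2 h).reachable.trans rce.symm
    · exact rab.trans ((hg _ _ _ _ hb hc).2 h).reachable
    · exact rab.trans (((hg _ _ _ _ hb he).2 h).reachable.trans rce.symm))
  refine ⟨Sum.inl ⁻¹' u, Sum.inl ⁻¹' (Subtype.val '' S), ?_, ?_⟩
  · intro x y hxy
    by_cases hx : Sum.inl x ∈ u
    · exact Or.inl hx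
    by_cases hy : Sum.inl y ∈ u
    · exact Or.inr (Or.inl hy)
    obtain ⟨h3, h4⟩ := hS ⟨Sum.inl x, (hmem _).2 hx⟩ ⟨Sum.inl y, (hmem _).2 hy⟩
      ((hKadj _ _).2 ((hHG _ _).2 hxy))
    exact Or.inr (Or.inr ⟨⟨_, h3, rfl⟩, ⟨_, h4, rfl⟩⟩)
  · have hU : u.ncard = (Sum.inl ⁻¹' u : Set V).ncard + d := by
      have h3 : u = Sum.inl '' (Sum.inl ⁻¹' u : Set V) ∪ Set.range (Sum.inr : Fin d → V ⊕ Fin d) := by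
        ext (x | j)
        · simp
        · simpa using hnew j
      conv_lhs => rw [h3]
      rw [Set.ncard_union_eq (by
        rw [Set.disjoint_left]
        rintro _ ⟨x, _, rfl⟩ ⟨j, hj⟩
        cases hj), Set.ncard_image_of_injective _ Sum.inl_injective,
        ← Set.image_univ, Set.ncard_image_of_injective _ Sum.inr_injective]
      simp
    have hB : (Sum.inl ⁻¹' (Subtype.val '' S) : Set V).ncard ≤ S.ncard := by
      rw [← Set.ncard_image_of_injective S Subtype.val_injective,
        ← Set.ncard_image_of_injective _ (Sum.inl_injective (α := V) (β := Fin d))]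
      exact Set.ncard_le_ncard (Set.image_preimage_subset _ _) (Set.toFinite _)
    have hSS := Set.ncard_add_ncard_compl S
    omega

/-- Let `k ≥ 5`.  Any multigraph of maximum degree `Δ` whose matching number is less than
`k` and such that every two of its edges are incident or joined by an edge has strong clique
number at most `(k - 1/2)Δ`. -/
theorem stmt_11 (k : ℕ) (hk : 5 ≤ k) {V E : Type} [Fintype V] [Fintype E]
    (ends : E → Sym2 V) (hloop : ∀ e, ¬ (ends e).IsDiag)
    (Δ : ℕ) (hΔ : ∀ v : V, {e : E | v ∈ ends e}.ncard ≤ Δ)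
    (hmatch : ∀ M : Finset E,
      (∀ e ∈ M, ∀ f ∈ M, e ≠ f → ¬ ∃ x, x ∈ ends e ∧ x ∈ ends f) → M.card < k)
    (hdiam : ∀ e f : E, e ≠ f →
      (∃ x, x ∈ ends e ∧ x ∈ ends f) ∨
      ∃ x y, x ∈ ends e ∧ y ∈ ends f ∧ ∃ g, ends g = s(x, y))
    (S : Finset E) (hS : IsMStrongCliqueSet ends (S : Set E)) :
    (S.card : ℝ) ≤ ((k : ℝ) - 1 / 2) * (Δ : ℝ) := by
  classical
  suffices hw : ∃ w : V → ℕ, (∀ e x y, ends e = s(x, y) → 2 ≤ w x + w y) ∧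
      ∑ v, w v + 1 ≤ 2 * k by
    obtain ⟨w, hw1, hw2⟩ := hw
    have h1 := two_mul_card_le ends hloop Δ hΔ w hw1
    have h2 : S.card ≤ Fintype.card E := Finset.card_le_univ S
    have h3 : 2 * S.card + Δ ≤ 2 * k * Δ := by
      have := Nat.mul_le_mul_right Δ hw2
      rw [Nat.add_mul, one_mul] at this
      omega
    have h4 : (2 * S.card + Δ : ℝ) ≤ 2 * k * Δ := by exact_mod_cast h3
    linarith
  by_cases hn : Fintype.card V + 1 ≤ 2 * k
  · exact ⟨fun _ => 1, fun _ _ _ _ => le_rfl, by simpa using hn⟩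
  let G : SimpleGraph V :=
    { Adj := fun x y => ∃ e, ends e = s(x, y)
      symm := ⟨fun x y ⟨e, he⟩ => ⟨e, he.trans Sym2.eq_swap⟩⟩
      loopless := ⟨fun x ⟨e, he⟩ => hloop e (by rw [he]; rfl)⟩ }
  obtain ⟨U, B, hUB, hcard⟩ := exists_cover G (Fintype.card V - 2 * k)
    ⟨Fintype.card V - k, by omega⟩ (by
      rintro a b c e ⟨f, hf⟩ ⟨g, hg⟩
      by_cases hfg : f = g
      · rw [hfg, hg] at hf
        rcases Sym2.eq_iff.1 hf with ⟨h, _⟩ | ⟨h, _⟩ <;> grind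
      rcases hdiam f g hfg with ⟨x, hx1, hx2⟩ | ⟨x, y, hx, hy, hxy⟩
      · rw [hf, Sym2.mem_iff] at hx1
        rw [hg, Sym2.mem_iff] at hx2
        grind
      · have hadj : G.Adj x y := hxy
        rw [hf, Sym2.mem_iff] at hx
        rw [hg, Sym2.mem_iff] at hy
        rcases hx with rfl | rfl <;> rcases hy with rfl | rfl <;> tauto) (by
      rintro ⟨M, hM⟩
      obtain ⟨F, hF, hFc⟩ := exists_matching ends G (fun _ _ h => h) _ M hM
      have := hmatch F hF
      omega)
  refine ⟨fun v => 2 * (if v ∈ U then 1 else 0) + (if v ∈ B then 1 else 0), ?_, ?_⟩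
  · intro e x y he
    rcases hUB x y ⟨e, he⟩ with h | h | ⟨h, h'⟩
    · simp only [h, if_true]; omega
    · simp only [h, if_true]; omega
    · simp only [h, h', if_true]; omega
  · rw [Finset.sum_add_distrib, ← Finset.mul_sum, Finset.sum_boole, Finset.sum_boole]
    rw [Set.ncard_eq_toFinset_card', Set.ncard_eq_toFinset_card'] at hcard
    have e1 : (Finset.univ.filter fun v => v ∈ U) = U.toFinset := by ext; simp
    have e2 : (Finset.univ.filter fun v => v ∈ B) = B.toFinset := by ext; simp
    rw [e1, e2]
    simp only [Nat.cast_id]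
    omega
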